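/- arXiv:math/0702124 — 4 statements merged into one kernel-verified Lean document; each statement's English description precedes it below -/
import Mathlib

section
/- Let M and N be metric trees, let T : M → N be a continuous map, and let k ≥ 0. Then T is k-set-contractive if and only if T is k-ball-contractive. -/
/-- `S` is a metric segment from `x` to `y` in a metric space: `S` contains `x` and `y`, and
the map `z ↦ dist x z` is an isometry from `S` onto the real interval `[0, dist x y]`. -/
def IsMetricSegment {X : Type*} [MetricSpace X] (S : Set X) (x y : X) : Prop :=
  x ∈ S ∧ y ∈ S ∧
    (∀ z ∈ S, ∀ w ∈ S, |dist x z - dist x w| = dist z w) ∧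
    (fun z => dist x z) '' S = Set.Icc 0 (dist x y)

/-- A metric tree structure on a metric space `M`: every pair of points is joined by a unique
metric segment `seg x y`, and if `[x,z] ∩ [z,y] = {z}` then `[x,z] ∪ [z,y] = [x,y]`. -/
structure MetricTree (M : Type*) [MetricSpace M] where
  seg : M → M → Set M
  seg_isSegment : ∀ x y : M, IsMetricSegment (seg x y) x y
  seg_unique : ∀ x y : M, ∀ S : Set M, IsMetricSegment S x y → S = seg x y
  seg_glue : ∀ x y z : M, seg x z ∩ seg z y = {z} → seg x z ∪ seg z y = seg x y

/-- The set (Kuratowski) measure of noncompactness of `A`: the infimum of all `b > 0` such that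
`A` admits a finite cover by subsets of `A` of diameter at most `b`. -/
noncomputable def setMNC {X : Type*} [MetricSpace X] (A : Set X) : ℝ :=
  sInf {b : ℝ | 0 < b ∧ ∃ (n : ℕ) (E : Fin n → Set X),
    (∀ j, E j ⊆ A) ∧ (∀ j, Metric.diam (E j) ≤ b) ∧ A ⊆ ⋃ j, E j}

/-- The ball (Hausdorff) measure of noncompactness of `A`: the infimum of all `b > 0` such that
`A` admits a finite cover by open balls of radius `b` centered in the ambient space. -/
noncomputable def ballMNC {X : Type*} [MetricSpace X] (A : Set X) : ℝ :=
  sInf {b : ℝ | 0 < b ∧ ∃ (n : ℕ) (c : Fin n → X), A ⊆ ⋃ j, Metric.ball (c j) b}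

/-- The diameter-based ball measure of noncompactness of `A`: the infimum of all `b > 0` such
that `A` admits a finite cover by open balls each of diameter at most `b`. -/
noncomputable def ballDiamMNC {X : Type*} [MetricSpace X] (A : Set X) : ℝ :=
  sInf {b : ℝ | 0 < b ∧ ∃ (n : ℕ) (c : Fin n → X) (r : Fin n → ℝ),
    (∀ j, Metric.diam (Metric.ball (c j) (r j)) ≤ b) ∧ A ⊆ ⋃ j, Metric.ball (c j) (r j)}

/-- `b > 0` is Lifschitz for `X` iff there is `a > 1` such that whenever `dist x y > r > 0`,
some closed ball of radius `r` contains `closedBall x (a*r) ∩ closedBall y (b*r)`. -/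
def IsLifschitz (X : Type*) [MetricSpace X] (b : ℝ) : Prop :=
  0 < b ∧ ∃ a : ℝ, 1 < a ∧ ∀ x y : X, ∀ r : ℝ, 0 < r → r < dist x y →
    ∃ z : X, Metric.closedBall x (a * r) ∩ Metric.closedBall y (b * r) ⊆ Metric.closedBall z r

/-- The Lifschitz characteristic of `X`: the supremum of all `b` Lifschitz for `X`. -/
noncomputable def lifschitzChar (X : Type*) [MetricSpace X] : ℝ :=
  sSup {b : ℝ | IsLifschitz X b}

theorem aux_le {M : Type*} [MetricSpace M] {S : Set M} {x y w : M}
    (h : IsMetricSegment S x y) (hw : w ∈ S) : dist x w ≤ dist x y := by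
  have : dist x w ∈ (fun z => dist x z) '' S := ⟨w, hw, rfl⟩
  rw [h.2.2.2] at this
  exact this.2

theorem aux_ex {M : Type*} [MetricSpace M] {S : Set M} {x y : M}
    (h : IsMetricSegment S x y) {t : ℝ} (h0 : 0 ≤ t) (h1 : t ≤ dist x y) :
    ∃ w ∈ S, dist x w = t := by
  have : t ∈ (fun z => dist x z) '' S := by rw [h.2.2.2]; exact ⟨h0, h1⟩
  exact this

theorem aux_add {M : Type*} [MetricSpace M] {S : Set M} {x y w : M}
    (h : IsMetricSegment S x y) (hw : w ∈ S) : dist x w + dist w y = dist x y := by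
  have h1 := aux_le h hw
  have h2 := h.2.2.1 w hw y h.2.1
  rw [abs_of_nonpos (by linarith)] at h2
  linarith

theorem aux_left {M : Type*} [MetricSpace M] {S : Set M} {x y p : M}
    (h : IsMetricSegment S x y) (hp : p ∈ S) :
    IsMetricSegment {w ∈ S | dist x w ≤ dist x p} p x := by
  have key : ∀ w ∈ S, dist x w ≤ dist x p → dist p w = dist x p - dist x w := by
    intro w hw hle
    have := h.2.2.1 p hp w hw
    rw [abs_of_nonneg (by linarith)] at this
    linarith
  refine ⟨⟨hp, le_refl _⟩, ⟨h.1, by simp⟩, ?_, ?_⟩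
  · rintro z ⟨hz, hz'⟩ w ⟨hw, hw'⟩
    rw [key z hz hz', key w hw hw', ← h.2.2.1 z hz w hw, abs_sub_comm]
    congr 1; ring
  · ext t
    constructor
    · rintro ⟨w, ⟨hw, hw'⟩, rfl⟩
      refine ⟨dist_nonneg, ?_⟩
      have := key w hw hw'
      have h3 : 0 ≤ dist x w := dist_nonneg
      rw [dist_comm p x]
      change dist p w ≤ _
      linarith
    · rintro ⟨h0, h1⟩
      rw [dist_comm p x] at h1
      obtain ⟨w, hw, hwt⟩ := aux_ex h (t := dist x p - t) (by linarith)
        (by linarith [aux_le h hp])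
      refine ⟨w, ⟨hw, by linarith⟩, ?_⟩
      change dist p w = t
      rw [key w hw (by linarith)]; linarith

theorem aux_right {M : Type*} [MetricSpace M] {S : Set M} {x y p : M}
    (h : IsMetricSegment S x y) (hp : p ∈ S) :
    IsMetricSegment {w ∈ S | dist x p ≤ dist x w} p y := by
  have key : ∀ w ∈ S, dist x p ≤ dist x w → dist p w = dist x w - dist x p := by
    intro w hw hle
    have := h.2.2.1 p hp w hw
    rw [abs_of_nonpos (by linarith)] at this
    linarith
  have hpy := key y h.2.1 (aux_le h hp)
  refine ⟨⟨hp, le_refl _⟩, ⟨h.2.1, aux_le h hp⟩, ?_, ?_⟩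
  · rintro z ⟨hz, hz'⟩ w ⟨hw, hw'⟩
    rw [key z hz hz', key w hw hw', ← h.2.2.1 z hz w hw]
    congr 1; ring
  · ext t
    constructor
    · rintro ⟨w, ⟨hw, hw'⟩, rfl⟩
      refine ⟨dist_nonneg, ?_⟩
      have := key w hw hw'
      change dist p w ≤ _
      linarith [aux_le h hw]
    · rintro ⟨h0, h1⟩
      obtain ⟨w, hw, hwt⟩ := aux_ex h (t := dist x p + t) (by positivity)
        (by linarith)
      refine ⟨w, ⟨hw, by linarith⟩, ?_⟩
      change dist p w = t
      rw [key w hw (by linarith)]; linarith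

theorem aux_min {M : Type*} [MetricSpace M] {S : Set M} {x y : M}
    (h : IsMetricSegment S x y) (z : M) : ∃ p ∈ S, ∀ w ∈ S, dist z p ≤ dist z w := by
  have hc : IsCompact S := by
    have hf : ∀ t : Set.Icc (0:ℝ) (dist x y), ∃ w ∈ S, dist x w = t :=
      fun t => aux_ex h t.2.1 t.2.2
    choose f hfS hf using hf
    have hcont : Continuous f := by
      apply Isometry.continuous
      apply Isometry.of_dist_eq
      intro s t
      rw [← h.2.2.1 _ (hfS s) _ (hfS t), hf, hf, Subtype.dist_eq, Real.dist_eq]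
    have : S = Set.range f := by
      ext w
      constructor
      · intro hw
        refine ⟨⟨dist x w, dist_nonneg, aux_le h hw⟩, ?_⟩
        rw [← dist_eq_zero, ← h.2.2.1 _ (hfS _) _ hw, hf]
        simp
      · rintro ⟨t, rfl⟩
        exact hfS t
    rw [this]
    exact isCompact_range hcont
  obtain ⟨p, hp, hmin⟩ := hc.exists_isMinOn ⟨x, h.1⟩
    (f := fun w => dist z w) (by fun_prop)
  exact ⟨p, hp, fun w hw => hmin hw⟩

theorem aux_tripod {M : Type*} [MetricSpace M] (TM : MetricTree M) (x y z : M) :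
    ∃ p ∈ TM.seg x y, dist z x = dist z p + dist p x ∧ dist z y = dist z p + dist p y := by
  have h := TM.seg_isSegment x y
  obtain ⟨p, hp, hmin⟩ := aux_min h z
  have key : ∀ u, TM.seg p u ⊆ TM.seg x y → dist z u = dist z p + dist p u := by
    intro u hu
    have hint : TM.seg z p ∩ TM.seg p u = {p} := by
      ext w
      constructor
      · rintro ⟨h1, h2⟩
        have h3 := hmin w (hu h2)
        have h4 := aux_add (TM.seg_isSegment z p) h1
        have h5 : 0 ≤ dist w p := dist_nonneg
        exact dist_eq_zero.1 (by linarith)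
      · rintro rfl
        exact ⟨(TM.seg_isSegment z w).2.1, (TM.seg_isSegment w u).1⟩
    have hg := TM.seg_glue z u p hint
    have hpm : p ∈ TM.seg z u := by
      rw [← hg]; exact Or.inl (TM.seg_isSegment z p).2.1
    exact (aux_add (TM.seg_isSegment z u) hpm).symm
  refine ⟨p, hp, key x ?_, key y ?_⟩
  · rw [← TM.seg_unique _ _ _ (aux_left h hp)]; exact fun w hw => hw.1
  · rw [← TM.seg_unique _ _ _ (aux_right h hp)]; exact fun w hw => hw.1

theorem aux_ball {M : Type*} [MetricSpace M] (TM : MetricTree M) [Nonempty M] (E : Set M)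
    (hE : Bornology.IsBounded E) (r : ℝ) (hr0 : 0 < r) (hr : Metric.diam E < 2 * r) :
    ∃ c, E ⊆ Metric.ball c r := by
  rcases E.eq_empty_or_nonempty with rfl | ⟨e, he⟩
  · exact ⟨Classical.arbitrary M, by simp⟩
  have hxy : ∃ x ∈ E, ∃ y ∈ E, 2 * Metric.diam E - 2 * r < dist x y := by
    by_contra! hcon
    by_cases h0 : 0 ≤ 2 * Metric.diam E - 2 * r
    · have := Metric.diam_le_of_forall_dist_le h0 hcon
      linarith
    · have := hcon e he e he
      rw [dist_self] at this
      exact h0 this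
  obtain ⟨x, hx, y, hy, hd⟩ := hxy
  have h := TM.seg_isSegment x y
  have hnn : 0 ≤ dist x y := dist_nonneg
  obtain ⟨c, hc, hxc⟩ := aux_ex h (t := dist x y / 2) (by linarith) (by linarith)
  have hcy := aux_add h hc
  refine ⟨c, fun z hz => ?_⟩
  rw [Metric.mem_ball]
  obtain ⟨p, hp, h1, h2⟩ := aux_tripod TM x y z
  have hpy := aux_add h hp
  have hcp := h.2.2.1 c hc p hp
  have hzx := Metric.dist_le_diam_of_mem hE hz hx
  have hzy := Metric.dist_le_diam_of_mem hE hz hy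
  have htri := dist_triangle z p c
  rw [dist_comm p c] at htri
  rw [dist_comm p x] at h1
  rcases abs_cases (dist x c - dist x p) with ⟨h3, h4⟩ | ⟨h3, h4⟩ <;> linarith

theorem aux_setMNC {M : Type*} [MetricSpace M] (TM : MetricTree M) (A : Set M) :
    setMNC A = 2 * ballMNC A := by
  by_cases hA : Bornology.IsBounded A
  · have hne : ∃ b : ℝ, 0 < b ∧ ∃ (n : ℕ) (c : Fin n → M), A ⊆ ⋃ j, Metric.ball (c j) b := by
      rcases A.eq_empty_or_nonempty with rfl | ⟨a, ha⟩
      · exact ⟨1, one_pos, 0, Fin.elim0, by simp⟩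
      · obtain ⟨r, hr, hs⟩ := hA.subset_ball_lt 0 a
        exact ⟨r, hr, 1, fun _ => a, fun z hz => Set.mem_iUnion.2 ⟨0, hs hz⟩⟩
    have h1 : ∀ b : ℝ, (0 < b ∧ ∃ (n : ℕ) (c : Fin n → M), A ⊆ ⋃ j, Metric.ball (c j) b) →
        (0 < 2 * b ∧ ∃ (n : ℕ) (E : Fin n → Set M),
          (∀ j, E j ⊆ A) ∧ (∀ j, Metric.diam (E j) ≤ 2 * b) ∧ A ⊆ ⋃ j, E j) := by
      rintro b ⟨hb, n, c, hc⟩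
      refine ⟨by linarith, n, fun j => Metric.ball (c j) b ∩ A, fun j => Set.inter_subset_right,
        fun j => ?_, fun z hz => ?_⟩
      · exact (Metric.diam_mono Set.inter_subset_left Metric.isBounded_ball).trans
          (Metric.diam_ball hb.le)
      · obtain ⟨j, hj⟩ := Set.mem_iUnion.1 (hc hz)
        exact Set.mem_iUnion.2 ⟨j, hj, hz⟩
    have h2 : ∀ b : ℝ, (0 < b ∧ ∃ (n : ℕ) (E : Fin n → Set M),
          (∀ j, E j ⊆ A) ∧ (∀ j, Metric.diam (E j) ≤ b) ∧ A ⊆ ⋃ j, E j) →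
        ∀ r, b / 2 < r → 
        (0 < r ∧ ∃ (n : ℕ) (c : Fin n → M), A ⊆ ⋃ j, Metric.ball (c j) r) := by
      rintro b ⟨hb, n, E, hEA, hd, hcov⟩ r hr
      refine ⟨by linarith, ?_⟩
      rcases A.eq_empty_or_nonempty with rfl | ⟨a, ha⟩
      · exact ⟨0, Fin.elim0, by simp⟩
      · have : Nonempty M := ⟨a⟩
        have := fun j => aux_ball TM (E j) (hA.subset (hEA j)) r (by linarith)
          (by linarith [hd j])
        choose c hc using this
        exact ⟨n, c, hcov.trans (Set.iUnion_mono hc)⟩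
    apply le_antisymm
    · have : setMNC A / 2 ≤ ballMNC A := by
        apply le_csInf hne
        intro b hb
        have : setMNC A ≤ 2 * b := csInf_le ⟨0, fun t ht => ht.1.le⟩ (h1 b hb)
        linarith
      linarith
    · obtain ⟨b0, hb0⟩ := hne
      apply le_csInf ⟨2 * b0, h1 b0 hb0⟩
      intro b hb
      have : ballMNC A ≤ b / 2 := by
        apply le_of_forall_gt_imp_ge_of_dense
        intro r hr
        exact csInf_le ⟨0, fun t ht => ht.1.le⟩ (h2 b hb r hr)
      linarith
  · have h1 : ballMNC A = 0 := by
      have : {b : ℝ | 0 < b ∧ ∃ (n : ℕ) (c : Fin n → M), A ⊆ ⋃ j, Metric.ball (c j) b} = ∅ := by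
        ext b
        simp only [Set.mem_setOf_eq, Set.mem_empty_iff_false, iff_false]
        rintro ⟨_, n, c, hc⟩
        exact hA ((Bornology.isBounded_iUnion.2 fun j => Metric.isBounded_ball).subset hc)
      rw [ballMNC, this, Real.sInf_empty]
    have h2 : setMNC A = 0 := by
      apply le_antisymm
      · apply le_of_forall_gt_imp_ge_of_dense
        intro r hr
        refine csInf_le ⟨0, fun t ht => ht.1.le⟩ ⟨hr, 1, fun _ => A, fun _ => le_refl _,
          fun _ => ?_, fun z hz => Set.mem_iUnion.2 ⟨0, hz⟩⟩
        rw [Metric.diam_eq_zero_of_unbounded hA]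
        exact hr.le
      · exact Real.sInf_nonneg fun t ht => ht.1.le
    rw [h1, h2, mul_zero]

theorem stmt_4 {M N : Type*} [MetricSpace M] [MetricSpace N]
    (TM : MetricTree M) (TN : MetricTree N)
    (T : M → N) (hT : Continuous T) (k : ℝ) (hk : 0 ≤ k) :
    (∀ A : Set M, Bornology.IsBounded A → setMNC (T '' A) ≤ k * setMNC A) ↔
    (∀ A : Set M, Bornology.IsBounded A → ballMNC (T '' A) ≤ k * ballMNC A) := by
  constructor
  · intro h A hA
    have := h A hA
    rw [aux_setMNC TN, aux_setMNC TM] at this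
    linarith
  · intro h A hA
    have := h A hA
    rw [aux_setMNC TN, aux_setMNC TM]
    linarith
end

section
/- Let M be a metric tree, let a, x, y ∈ M and r > 0 with x, y ∈ B(a; r), and let m be the midpoint of the metric segment [x,y] (i.e., the unique point m ∈ [x,y] with d(x,m) = d(m,y) = d(x,y)/2). Then B_c(m; d(x,y)/2) ⊆ B(a; r), where B(a;r) is the open ball and B_c(m;s) the closed ball. -/
theorem seg_dist_aux {M : Type*} [MetricSpace M] {S : Set M} {x y p : M}
    (h : IsMetricSegment S x y) (hp : p ∈ S) : dist x p + dist p y = dist x y := by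
  obtain ⟨hx, hy, hi, him⟩ := h
  have h1 : dist x p ∈ Set.Icc 0 (dist x y) := by
    rw [← him]; exact ⟨p, hp, rfl⟩
  have h2 := hi p hp y hy
  rw [abs_of_nonpos (by linarith [h1.2])] at h2
  linarith

theorem seg_left_aux {M : Type*} [MetricSpace M] {S : Set M} {x y p : M}
    (h : IsMetricSegment S x y) (hp : p ∈ S) :
    IsMetricSegment {q | q ∈ S ∧ dist x q ≤ dist x p} p x := by
  have hpy := seg_dist_aux h hp
  obtain ⟨hx, hy, hi, him⟩ := h
  have key : ∀ z, z ∈ S → dist x z ≤ dist x p → dist p z = dist x p - dist x z := by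
    intro z hz hle
    rw [← hi p hp z hz, abs_of_nonneg (by linarith)]
  refine ⟨⟨hp, le_rfl⟩, ⟨hx, by simp⟩, ?_, ?_⟩
  · rintro z ⟨hz, hz'⟩ w ⟨hw, hw'⟩
    rw [key z hz hz', key w hw hw', ← hi z hz w hw, ← abs_neg]
    congr 1; ring
  · ext t
    constructor
    · rintro ⟨z, ⟨hz, hz'⟩, rfl⟩
      refine ⟨dist_nonneg, ?_⟩
      have := key z hz hz'
      have h0 : 0 ≤ dist x z := dist_nonneg
      simp only
      rw [dist_comm p x]; linarith
    · rintro ⟨h0, h1⟩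
      rw [dist_comm p x] at h1
      have : dist x p - t ∈ (fun z => dist x z) '' S := by
        rw [him]
        exact ⟨by linarith, by linarith [dist_nonneg (x := p) (y := y)]⟩
      obtain ⟨z, hz, hzt⟩ := this
      simp only at hzt
      refine ⟨z, ⟨hz, by linarith⟩, ?_⟩
      have := key z hz (by linarith)
      simp only
      linarith

theorem seg_right_aux {M : Type*} [MetricSpace M] {S : Set M} {x y p : M}
    (h : IsMetricSegment S x y) (hp : p ∈ S) :
    IsMetricSegment {q | q ∈ S ∧ dist x p ≤ dist x q} p y := by
  have hpy := seg_dist_aux h hp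
  obtain ⟨hx, hy, hi, him⟩ := h
  have key : ∀ z, z ∈ S → dist x p ≤ dist x z → dist p z = dist x z - dist x p := by
    intro z hz hle
    rw [← hi p hp z hz, abs_of_nonpos (by linarith)]
    ring
  refine ⟨⟨hp, le_rfl⟩, ⟨hy, by linarith [dist_nonneg (x := p) (y := y)]⟩, ?_, ?_⟩
  · rintro z ⟨hz, hz'⟩ w ⟨hw, hw'⟩
    rw [key z hz hz', key w hw hw', ← hi z hz w hw]
    congr 1; ring
  · ext t
    constructor
    · rintro ⟨z, ⟨hz, hz'⟩, rfl⟩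
      refine ⟨dist_nonneg, ?_⟩
      have := key z hz hz'
      have h1 : dist x z ∈ Set.Icc 0 (dist x y) := by
        rw [← him]; exact ⟨z, hz, rfl⟩
      simp only
      linarith [h1.2]
    · rintro ⟨h0, h1⟩
      have : dist x p + t ∈ (fun z => dist x z) '' S := by
        rw [him]
        exact ⟨by linarith [dist_nonneg (x := x) (y := p)], by linarith⟩
      obtain ⟨z, hz, hzt⟩ := this
      simp only at hzt
      refine ⟨z, ⟨hz, by linarith⟩, ?_⟩
      have := key z hz (by linarith)
      simp only
      linarith

theorem seg_min_aux {M : Type*} [MetricSpace M] {S : Set M} {x y : M} (a : M)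
    (h : IsMetricSegment S x y) : ∃ p ∈ S, ∀ q ∈ S, dist a p ≤ dist a q := by
  obtain ⟨hx, hy, hi, him⟩ := h
  have hex : ∀ t : ℝ, ∃ z, t ∈ Set.Icc 0 (dist x y) → z ∈ S ∧ dist x z = t := by
    intro t
    by_cases ht : t ∈ Set.Icc 0 (dist x y)
    · have ht' := ht
      rw [← him] at ht'
      obtain ⟨z, hz, hzt⟩ := ht'
      exact ⟨z, fun _ => ⟨hz, hzt⟩⟩
    · exact ⟨x, fun h => absurd h ht⟩
  choose g hg using hex
  have hc : ContinuousOn g (Set.Icc 0 (dist x y)) := by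
    rw [Metric.continuousOn_iff]
    intro b hb ε hε
    refine ⟨ε, hε, fun c hc hcb => ?_⟩
    rw [← hi _ (hg c hc).1 _ (hg b hb).1, (hg c hc).2, (hg b hb).2]
    rwa [Real.dist_eq] at hcb
  have hc' : ContinuousOn (fun t => dist a (g t)) (Set.Icc 0 (dist x y)) :=
    (continuous_const.dist continuous_id).comp_continuousOn hc
  obtain ⟨t, ht, hmin⟩ := isCompact_Icc.exists_isMinOn
    (Set.nonempty_Icc.2 dist_nonneg) hc'
  refine ⟨g t, (hg t ht).1, fun q hq => ?_⟩
  have hqI : dist x q ∈ Set.Icc 0 (dist x y) := by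
    rw [← him]; exact ⟨q, hq, rfl⟩
  have hq2 : g (dist x q) = q := by
    have := hi _ (hg _ hqI).1 q hq
    rw [(hg _ hqI).2, sub_self, abs_zero] at this
    exact dist_eq_zero.1 this.symm
  have := hmin hqI
  simp only [Set.mem_ofPred_eq, hq2] at this
  exact this

theorem glue_aux {M : Type*} [MetricSpace M] (T : MetricTree M) {S : Set M} {a p w : M}
    (hp : p ∈ S) (hmin : ∀ q ∈ S, dist a p ≤ dist a q) (hsub : T.seg p w ⊆ S) :
    dist a w = dist a p + dist p w := by
  have hap := T.seg_isSegment a p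
  have hpw := T.seg_isSegment p w
  have : T.seg a p ∩ T.seg p w = {p} := by
    ext q
    constructor
    · rintro ⟨h1, h2⟩
      have e := seg_dist_aux hap h1
      have := hmin q (hsub h2)
      have h0 : dist q p = 0 := le_antisymm (by linarith) dist_nonneg
      exact dist_eq_zero.1 h0
    · rintro rfl
      exact ⟨hap.2.1, hpw.1⟩
  have hg := T.seg_glue a w p this
  have hm : p ∈ T.seg a w := hg ▸ Or.inl hap.2.1
  exact (seg_dist_aux (T.seg_isSegment a w) hm).symm

theorem stmt_12 {M : Type*} [MetricSpace M] (T : MetricTree M)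
    (a x y m : M) (r : ℝ) (hr : 0 < r)
    (hx : x ∈ Metric.ball a r) (hy : y ∈ Metric.ball a r)
    (hm : m ∈ T.seg x y) (hmx : dist x m = dist x y / 2) (hmy : dist m y = dist x y / 2) :
    Metric.closedBall m (dist x y / 2) ⊆ Metric.ball a r := by
  intro z hz
  rw [Metric.mem_closedBall] at hz
  rw [Metric.mem_ball] at hx hy ⊢
  have hS := T.seg_isSegment x y
  obtain ⟨p, hp, hmin⟩ := seg_min_aux a hS
  have hax := glue_aux T (w := x) hp hmin
    (by rw [← T.seg_unique _ _ _ (seg_left_aux hS hp)]; exact fun q hq => hq.1)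
  have hay := glue_aux T (w := y) hp hmin
    (by rw [← T.seg_unique _ _ _ (seg_right_aux hS hp)]; exact fun q hq => hq.1)
  have hpy := seg_dist_aux hS hp
  have hpm := hS.2.2.1 p hp m hm
  have t1 := dist_triangle z m a
  have t2 := dist_triangle a p m
  rw [dist_comm m a] at t1
  rw [dist_comm x a] at hx
  rw [dist_comm y a] at hy
  rw [dist_comm p x] at hax
  rcases le_total (dist x p) (dist x m) with h | h
  · rw [abs_of_nonpos (by linarith)] at hpm
    linarith
  · rw [abs_of_nonneg (by linarith)] at hpm
    linarith
end

section
/- Let M be a metric tree, let a, x, y ∈ M and r > 0. If x, y ∈ B(a; r), then [x,y] ⊆ B(a; r), where B(a;r) is the open ball of radius r centered at a and [x,y] is the unique metric segment from x to y. (In other words, open balls in a metric tree are convex.) -/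
lemma MetricTree.dist_add_of_mem {M : Type*} [MetricSpace M] (T : MetricTree M)
    {x y z : M} (hz : z ∈ T.seg x y) : dist x z + dist z y = dist x y := by
  obtain ⟨_, hy, hi, him⟩ := T.seg_isSegment x y
  have h1 : dist x z ∈ Set.Icc 0 (dist x y) := him ▸ Set.mem_image_of_mem _ hz
  have h2 := hi z hz y hy
  rw [abs_of_nonpos (by linarith [h1.2])] at h2
  linarith

lemma MetricTree.no_branch {M : Type*} [MetricSpace M] (T : MetricTree M)
    {a x y z p q : M} (hz : dist x z + dist z y = dist x y)
    (hp : p ∈ T.seg a z) (hq : q ∈ T.seg a z) (hpx : p ∈ T.seg z x) (hqy : q ∈ T.seg z y)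
    (hpz : p ≠ z) (hqz : q ≠ z) : False := by
  have e1 := T.dist_add_of_mem hp
  have e2 := T.dist_add_of_mem hq
  have e3 := T.dist_add_of_mem hpx
  have e4 := T.dist_add_of_mem hqy
  have e5 := (T.seg_isSegment a z).2.2.1 p hp q hq
  have c1 := dist_pos.2 hpz
  have c2 := dist_pos.2 hqz
  have t1 := dist_triangle x p y
  have t2 := dist_triangle p q y
  rw [dist_comm z p, dist_comm z x, dist_comm p x] at e3
  rw [dist_comm z q] at e4
  rcases abs_cases (dist a p - dist a q) with h | h <;> linarith

lemma MetricTree.inter_ne {M : Type*} [MetricSpace M] (T : MetricTree M)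
    {a x z : M} (h : T.seg a z ∩ T.seg z x ≠ {z}) :
    ∃ p, p ∈ T.seg a z ∧ p ∈ T.seg z x ∧ p ≠ z := by
  by_contra hc
  push Not at hc
  apply h
  ext p
  constructor
  · rintro ⟨h1, h2⟩
    exact hc p h1 h2
  · rintro rfl
    exact ⟨(T.seg_isSegment a p).2.1, (T.seg_isSegment p x).1⟩

lemma MetricTree.dist_le_of_inter {M : Type*} [MetricSpace M] (T : MetricTree M)
    {a x z : M} (h : T.seg a z ∩ T.seg z x = {z}) : dist a z ≤ dist a x := by
  have hz : z ∈ T.seg a x := by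
    rw [← T.seg_glue a x z h]
    exact Or.inl (T.seg_isSegment a z).2.1
  have := T.dist_add_of_mem hz
  linarith [dist_nonneg (x := z) (y := x)]

theorem stmt_13 {M : Type*} [MetricSpace M] (T : MetricTree M)
    (a x y : M) (r : ℝ) (hr : 0 < r)
    (hx : x ∈ Metric.ball a r) (hy : y ∈ Metric.ball a r) :
    T.seg x y ⊆ Metric.ball a r := by
  intro z hz
  rw [Metric.mem_ball, dist_comm] at *
  by_cases h1 : T.seg a z ∩ T.seg z x = {z}
  · exact (T.dist_le_of_inter h1).trans_lt hx
  by_cases h2 : T.seg a z ∩ T.seg z y = {z}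
  · exact (T.dist_le_of_inter h2).trans_lt hy
  obtain ⟨p, hp, hpx, hpz⟩ := T.inter_ne h1
  obtain ⟨q, hq, hqy, hqz⟩ := T.inter_ne h2
  exact (T.no_branch (T.dist_add_of_mem hz) hp hq hpx hqy hpz hqz).elim
end

section
/- Let M be a compact metric tree and a ∈ M. Then M = ⋃_{f ∈ F} [a, f], where F is the set of final points (leaves) of M and [a,f] is the unique metric segment from a to f. -/
theorem MT_mem_dist {M : Type*} [MetricSpace M] {S : Set M} {x y z : M}
    (h : IsMetricSegment S x y) (hz : z ∈ S) : dist x z + dist z y = dist x y := by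
  obtain ⟨hx, hy, hi, him⟩ := h
  have h1 := hi z hz y hy
  have h2 : dist x z ∈ Set.Icc 0 (dist x y) := him ▸ ⟨z, hz, rfl⟩
  rw [abs_sub_comm, abs_of_nonneg (by linarith [h2.2])] at h1
  linarith

theorem MT_iff {M : Type*} [MetricSpace M] (T : MetricTree M) (x y z : M) :
    z ∈ T.seg x y ↔ dist x z + dist z y = dist x y := by
  refine ⟨fun h => MT_mem_dist (T.seg_isSegment x y) h, fun h => ?_⟩
  have s1 := T.seg_isSegment x z
  have s2 := T.seg_isSegment z y
  have k1 : ∀ u ∈ T.seg x z, dist x u + dist u z = dist x z := fun u hu => MT_mem_dist s1 hu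
  have k2 : ∀ v ∈ T.seg z y, dist x v = dist x z + dist z v := fun v hv => by
    have := MT_mem_dist s2 hv
    linarith [dist_triangle x v y, dist_triangle x z v]
  have k3 : ∀ u ∈ T.seg x z, ∀ v ∈ T.seg z y, dist x v - dist x u = dist u v := fun u hu v hv => by
    linarith [k1 u hu, k2 v hv, dist_triangle x u v, dist_triangle u z v]
  have key : IsMetricSegment (T.seg x z ∪ T.seg z y) x y := by
    refine ⟨Or.inl s1.1, Or.inr s2.2.1, ?_, ?_⟩
    · rintro u (hu | hu) v (hv | hv)
      · exact s1.2.2.1 u hu v hv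
      · rw [abs_sub_comm, k3 u hu v hv, abs_of_nonneg dist_nonneg]
      · rw [k3 v hv u hu, abs_of_nonneg dist_nonneg, dist_comm]
      · rw [k2 u hu, k2 v hv, add_sub_add_left_eq_sub]
        exact s2.2.2.1 u hu v hv
    · apply Set.Subset.antisymm
      · rintro _ ⟨u, hu | hu, rfl⟩
        · exact ⟨dist_nonneg, by
            linarith [k1 u hu, @dist_nonneg _ _ u z, @dist_nonneg _ _ z y]⟩
        · exact ⟨dist_nonneg, by
            linarith [k2 u hu, MT_mem_dist s2 hu, @dist_nonneg _ _ u y]⟩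
      · rintro t ⟨h0, h1⟩
        by_cases ht : t ≤ dist x z
        · have : t ∈ (fun w => dist x w) '' T.seg x z := s1.2.2.2 ▸ ⟨h0, ht⟩
          obtain ⟨u, hu, rfl⟩ := this
          exact ⟨u, Or.inl hu, rfl⟩
        · have : t - dist x z ∈ (fun w => dist z w) '' T.seg z y :=
            s2.2.2.2 ▸ ⟨by linarith, by linarith⟩
          obtain ⟨u, hu, hut⟩ := this
          refine ⟨u, Or.inr hu, ?_⟩
          have := k2 u hu
          simp only at hut ⊢
          linarith
  rw [← T.seg_unique x y _ key]
  exact Or.inl s1.2.1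

theorem MT_glue {M : Type*} [MetricSpace M] (T : MetricTree M) (a y f : M)
    (h : dist a f + dist f y ≠ dist a y) :
    ∃ p, p ≠ f ∧ p ∈ T.seg a f ∧ p ∈ T.seg f y := by
  by_contra! hc
  apply h
  rw [← MT_iff T, ← T.seg_glue a y f]
  · exact Or.inl (T.seg_isSegment a f).2.1
  · ext p
    constructor
    · rintro ⟨h1, h2⟩
      by_contra hp
      exact hc p hp h1 h2
    · rintro rfl
      exact ⟨(T.seg_isSegment a p).2.1, (T.seg_isSegment p y).1⟩

theorem MT_or {M : Type*} [MetricSpace M] (T : MetricTree M) (a y z f : M)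
    (h : dist y f + dist f z = dist y z) :
    dist a f + dist f y = dist a y ∨ dist a f + dist f z = dist a z := by
  by_contra! hc
  obtain ⟨p, hp, p1, p2⟩ := MT_glue T a y f hc.1
  obtain ⟨q, hq, q1, q2⟩ := MT_glue T a z f hc.2
  have hd := (T.seg_isSegment a f).2.2.1 p p1 q q1
  rw [MT_iff] at p1 p2 q1 q2
  have hp' := dist_pos.2 hp
  have hq' := dist_pos.2 hq
  have t1 := dist_triangle y p z
  have t2 := dist_triangle p q z
  have c1 := dist_comm y f
  have c2 := dist_comm f p
  have c3 := dist_comm f q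
  have c4 := dist_comm y p
  rcases abs_cases (dist a p - dist a q) with ⟨h1, _⟩ | ⟨h1, _⟩ <;> linarith

theorem stmt_16 {M : Type*} [MetricSpace M] [CompactSpace M] (T : MetricTree M) (a : M) :
    (Set.univ : Set M) =
      ⋃ f ∈ {f : M | ∀ x y : M, f ∉ T.seg x y \ {x, y}}, T.seg a f := by
  symm
  rw [Set.eq_univ_iff_forall]
  intro x
  have hcl : IsClosed {f : M | dist a x + dist x f = dist a f} :=
    isClosed_eq (by fun_prop) (by fun_prop)
  obtain ⟨f, hf, hmax⟩ := hcl.isCompact.exists_isMaxOn ⟨x, by simp⟩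
    (f := fun f => dist a f) (by fun_prop)
  simp only [Set.mem_setOf_eq] at hf
  have hno : ∀ y, y ≠ f → dist a f + dist f y ≠ dist a y := by
    intro y hy h
    have hy' := dist_pos.2 hy
    have := dist_comm y f
    have hm : dist a y ≤ dist a f := hmax (show dist a x + dist x y = dist a y by
      linarith [dist_triangle x f y, dist_triangle a x y])
    linarith
  simp only [Set.mem_iUnion]
  refine ⟨f, ?_, (MT_iff T a f x).2 hf⟩
  rintro y z ⟨h1, h2⟩
  simp only [Set.mem_insert_iff, Set.mem_singleton_iff, not_or] at h2
  rcases MT_or T a y z f ((MT_iff T y z f).1 h1) with h | h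
  · exact hno y (Ne.symm h2.1) h
  · exact hno z (Ne.symm h2.2) h
end
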